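/- Let s be a complex number with Re s > 1, and let Σ^♯ = ∑ 1/(m^{s+1} · n^4 · (m+2n)), the sum over all integers m ≥ 1 and nonzero integers n with m+2n ≠ 0. Then Σ^♯ = (π⁴/45)·ζ(s+2) + (4π²/3)·ζ(s+4) − (16 + 2^{−s})·ζ(s+6). -/

import Mathlib

open Complex

/-!
For fixed `m ≠ 0` decompose `1 / (n ^ 4 * (m + 2 * n))` into partial fractions in `n`. The terms
in `1 / n ^ 4` and `1 / n ^ 2` sum to `2 * ζ(4)` and `2 * ζ(2)`, those in `1 / n ^ 3` cancel under
`n ↦ -n`, and the simple poles combine to `1 / (m + 2 * n) - 1 / (2 * n)`, whose sum is zero: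
adding its reflection under `n ↦ -m - n` leaves a telescoping series. Omitting `n = 0` and
`n = -m / 2` from these complete sums costs `16 / m ^ 5` and, for even `m` only, `64 / m ^ 5`, the
latter being the source of the factor `2 ^ (-s)`. Summing over `m` is justified by
`|m| ≤ 3 * |n| * |m + 2 * n|`, which makes the double series absolutely convergent for `-1 < re s`.
-/

section SumsOverInt

open Filter Topology SummationFilter

variable {E : Type*} [AddCommGroup E]

lemma sum_Ico_int_shift_sub (g : ℤ → E) (m N : ℕ) :
    ∑ n ∈ Finset.Ico (-N : ℤ) N, (g (n + m) - g n) =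
      ∑ j ∈ Finset.range m, (g (N + j) - g (-N + j)) := by
  induction m with
  | zero => simp
  | succ m ih =>
    have unit_step := Finset.sum_Ico_int_sub N fun n ↦ g (n + m)
    rw [Finset.sum_range_succ, ← ih, ← neg_sub (g (-N + m)), ← unit_step, ← sub_eq_add_neg,
      ← Finset.sum_sub_distrib]
    refine Finset.sum_congr rfl fun n _ ↦ ?_
    rw [Nat.cast_succ, ← add_assoc, add_right_comm n 1]
    abel

variable [TopologicalSpace E]

lemma hasSum_zero_of_hasSum_add_comp_equiv [ContinuousAdd E] [T2Space E] [IsAddTorsionFree E]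
    {ι : Type*} {f : ι → E} (hf : Summable f) (σ : ι ≃ ι)
    (h : HasSum (fun i ↦ f i + f (σ i)) 0) : HasSum f 0 := by
  obtain ⟨a, ha⟩ := hf
  have two_a : a + a = 0 := (ha.add (σ.hasSum_iff.2 ha)).unique h
  rwa [self_eq_neg.1 (eq_neg_of_add_eq_zero_left two_a)] at ha

variable [IsTopologicalAddGroup E]

lemma hasSum_int_shift_sub [T2Space E] {g : ℤ → E} (hg : Tendsto g cofinite (𝓝 0)) {m : ℕ}
    (hs : Summable fun n ↦ g (n + m) - g n) : HasSum (fun n ↦ g (n + m) - g n) 0 := by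
  have partial_sums : HasSum (fun n ↦ g (n + m) - g n) 0 (symmetricIco ℤ) := by
    rw [hasSum_symmetricIco_int_iff]
    simp_rw [sum_Ico_int_shift_sub]
    rw [Int.cofinite_eq, tendsto_sup] at hg
    have at_top (j : ℕ) : Tendsto (fun N : ℕ ↦ g (N + j)) atTop (𝓝 0) :=
      hg.2.comp (tendsto_atTop_add_const_right _ _ tendsto_natCast_atTop_atTop)
    have at_bot (j : ℕ) : Tendsto (fun N : ℕ ↦ g (-N + j)) atTop (𝓝 0) :=
      hg.1.comp (tendsto_atBot_add_const_right _ _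
        (tendsto_neg_atTop_atBot.comp tendsto_natCast_atTop_atTop))
    simpa using tendsto_finsetSum (Finset.range m) fun j _ ↦ (at_top j).sub (at_bot j)
  obtain ⟨a, ha⟩ := hs
  rwa [HasSum.unique (ha.mono_left LeAtTop.le_atTop) partial_sums] at ha

lemma hasSum_two_mul_shift_sub_of_odd [T2Space E] [IsAddTorsionFree E] {f : ℤ → E} (hodd : f.Odd)
    (hf : Tendsto f cofinite (𝓝 0)) {m : ℕ} (hs : Summable fun n ↦ f (m + 2 * n) - f (2 * n)) :
    HasSum (fun n ↦ f (m + 2 * n) - f (2 * n)) 0 := by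
  let reflection : ℤ ≃ ℤ := Equiv.subLeft (-m : ℤ)
  have telescoping (n : ℤ) : f (m + 2 * n) - f (2 * n) +
      (f (m + 2 * reflection n) - f (2 * reflection n)) = f (2 * (n + m)) - f (2 * n) := by
    rw [Equiv.subLeft_apply, show (m : ℤ) + 2 * (-m - n) = -(m + 2 * n) by ring,
      show (2 : ℤ) * (-m - n) = -(2 * (n + m)) by ring, hodd, hodd]
    abel
  refine hasSum_zero_of_hasSum_add_comp_equiv hs reflection ?_
  have hs' := hs.add (reflection.summable_iff.2 hs)
  simp only [Function.comp_apply, telescoping] at hs' ⊢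
  exact hasSum_int_shift_sub (g := fun n ↦ f (2 * n))
    (hf.comp (mul_right_injective₀ two_ne_zero).tendsto_cofinite) hs'

end SumsOverInt

section Zeta

lemma hasSum_one_div_nat_cpow {s : ℂ} (hs : 1 < s.re) :
    HasSum (fun n : ℕ ↦ 1 / (n : ℂ) ^ s) (riemannZeta s) :=
  zeta_eq_tsum_one_div_nat_cpow hs ▸ (summable_one_div_nat_cpow.2 hs).hasSum

lemma hasSum_ite_even_one_div_nat_cpow {s : ℂ} (hs : 1 < s.re) :
    HasSum (fun n : ℕ ↦ if Even n then 1 / (n : ℂ) ^ s else 0)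
      ((2 : ℂ) ^ (-s) * riemannZeta s) := by
  rw [← (mul_right_injective₀ (two_ne_zero' ℕ)).hasSum_iff]
  · convert! (hasSum_one_div_nat_cpow hs).mul_left ((2 : ℂ) ^ (-s)) using 2 with k
    rw [Function.comp_apply, if_pos (even_two_mul k), Nat.cast_mul, natCast_mul_natCast_cpow,
      cpow_neg, Nat.cast_ofNat, inv_mul_eq_div, div_div, mul_comm]
  · exact fun n hn ↦ if_neg fun ⟨k, hk⟩ ↦ hn ⟨k, by dsimp only; lia⟩

lemma hasSum_int_one_div_pow_of_even {k : ℕ} (hk : Even k) (hk₀ : k ≠ 0) :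
    HasSum (fun n : ℤ ↦ 1 / (n : ℂ) ^ k) (2 * riemannZeta k) := by
  have over_nat : HasSum (fun n : ℕ ↦ 1 / (n : ℂ) ^ k) (riemannZeta k) := by
    have one_lt : 1 < k := by grind
    simpa using hasSum_one_div_nat_cpow (s := k) (by simpa using one_lt)
  have := HasSum.of_nat_of_neg (f := fun n : ℤ ↦ 1 / (n : ℂ) ^ k)
    (by simpa using over_nat) (by simpa [hk.neg_pow] using over_nat)
  simpa [hk₀, two_mul] using this

lemma summable_int_one_div_pow {k : ℕ} (hk : 1 < k) : Summable fun n : ℤ ↦ 1 / (n : ℂ) ^ k := by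
  simpa using summable_ofReal.2 (Real.summable_one_div_int_pow.2 hk)

lemma hasSum_int_one_div_pow_of_odd {k : ℕ} (hk : Odd k) (hk₁ : 1 < k) :
    HasSum (fun n : ℤ ↦ 1 / (n : ℂ) ^ k) 0 :=
  hasSum_zero_of_hasSum_add_comp_equiv (summable_int_one_div_pow hk₁) (Equiv.neg ℤ) <| by
    simp [hk.neg_pow, inv_neg]

end Zeta

section InnerSum

open Filter Topology

-- The two indicator terms correct for `1 / 0 = 0` at the poles `y = 0` and `y = -x / 2`.
lemma partial_fractions {K : Type*} [Field K] [DecidableEq K] (h2 : (2 : K) ≠ 0) {x : K}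
    (hx : x ≠ 0) (y : K) :
    1 / (y ^ 4 * (x + 2 * y)) =
      1 / x * (1 / y ^ 4) - 2 / x ^ 2 * (1 / y ^ 3) + 4 / x ^ 3 * (1 / y ^ 2) +
        16 / x ^ 4 * (1 / (x + 2 * y) - 1 / (2 * y)) -
        (if y = 0 then 16 / x ^ 5 else 0) - (if x + 2 * y = 0 then 64 / x ^ 5 else 0) := by
  by_cases hy : y = 0
  · subst hy
    simp only [ne_eq, OfNat.ofNat_ne_zero, not_false_eq_true, zero_pow, mul_zero, add_zero,
      zero_mul, div_zero, sub_self, sub_zero, zero_add, if_true, hx, if_false]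
    field_simp
    ring
  by_cases hxy : x + 2 * y = 0
  · obtain rfl : x = -2 * y := by linear_combination hxy
    simp only [hxy, hy, if_true, if_false]
    field_simp
    ring
  · simp only [hxy, hy, if_false]
    generalize hd : x + 2 * y = d at hxy
    have hx' : x = d - 2 * y := by linear_combination hd
    field_simp
    rw [hx']
    ring

lemma summable_one_div_add_two_mul_sub (m : ℕ) :
    Summable fun n : ℤ ↦ 1 / ((m : ℂ) + 2 * n) - 1 / (2 * n) := by
  refine ((EisensteinSeries.summable_linear_sub_mul_linear_add ((m : ℂ) / 2) 0 1).mul_left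
    ((m : ℂ) / 4)).congr_cofinite ?_
  filter_upwards [eventually_cofinite_ne 0, eventually_cofinite_ne (-(m : ℤ) / 2)] with n hn hmn
  have hn' : (n : ℂ) ≠ 0 := Int.cast_ne_zero.2 hn
  have hmn' : (m : ℂ) + 2 * n ≠ 0 := by
    norm_cast
    lia
  rw [Int.cast_zero, zero_mul, zero_sub, Int.cast_one, one_mul,
    show (m : ℂ) / 2 + n = (m + 2 * n) / 2 by ring,
    div_sub_div _ _ hmn' (mul_ne_zero two_ne_zero hn')]
  field_simp
  ring

lemma hasSum_one_div_add_two_mul_sub (m : ℕ) :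
    HasSum (fun n : ℤ ↦ 1 / ((m : ℂ) + 2 * n) - 1 / (2 * n)) 0 := by
  have tendsto_zero : Tendsto (fun n : ℤ ↦ 1 / (n : ℂ)) cofinite (𝓝 0) := by
    have over_real : Tendsto (fun n : ℤ ↦ (n : ℝ)⁻¹) cofinite (𝓝 0) :=
      tendsto_inv₀_cobounded.comp
        (Metric.cobounded_eq_cocompact (α := ℝ) ▸ Int.tendsto_coe_cofinite)
    simpa [Function.comp_def, -Int.cofinite_eq] using (continuous_ofReal.tendsto 0).comp over_real
  have := hasSum_two_mul_shift_sub_of_odd (f := fun n : ℤ ↦ 1 / (n : ℂ)) (m := m)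
    (fun n ↦ by simp [inv_neg]) tendsto_zero
    (by simpa using summable_one_div_add_two_mul_sub m)
  simpa using this

lemma hasSum_int_ite_add_two_mul_eq_zero (m : ℕ) (c : ℂ) :
    HasSum (fun n : ℤ ↦ if (m : ℂ) + 2 * n = 0 then c else 0) (if Even m then c else 0) := by
  norm_cast
  split_ifs with h
  · obtain ⟨k, rfl⟩ := h
    convert hasSum_ite_eq (-(k : ℤ)) c using 3
    lia
  · convert hasSum_zero using 2 with n
    exact if_neg fun h' ↦ h (by grind)

lemma hasSum_int_one_div_pow_four_mul_add_two_mul {m : ℕ} (hm : m ≠ 0) :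
    HasSum (fun n : ℤ ↦ 1 / ((n : ℂ) ^ 4 * (m + 2 * n)))
      ((Real.pi : ℂ) ^ 4 / 45 / m + 4 * (Real.pi : ℂ) ^ 2 / 3 / m ^ 3 - 16 / m ^ 5 -
        (if Even m then 64 / (m : ℂ) ^ 5 else 0)) := by
  have order_four : HasSum (fun n : ℤ ↦ 1 / (n : ℂ) ^ 4) ((Real.pi : ℂ) ^ 4 / 45) := by
    convert hasSum_int_one_div_pow_of_even (k := 4) (by decide) (by decide) using 1
    rw [Nat.cast_ofNat, riemannZeta_four]
    ring
  have order_three : HasSum (fun n : ℤ ↦ 1 / (n : ℂ) ^ 3) 0 :=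
    hasSum_int_one_div_pow_of_odd (by decide) (by decide)
  have order_two : HasSum (fun n : ℤ ↦ 1 / (n : ℂ) ^ 2) ((Real.pi : ℂ) ^ 2 / 3) := by
    convert hasSum_int_one_div_pow_of_even (k := 2) (by decide) (by decide) using 1
    rw [Nat.cast_ofNat, riemannZeta_two]
    ring
  have at_zero : HasSum (fun n : ℤ ↦ if (n : ℂ) = 0 then 16 / (m : ℂ) ^ 5 else 0)
      (16 / (m : ℂ) ^ 5) := by
    simpa only [Int.cast_eq_zero] using hasSum_ite_eq (0 : ℤ) (16 / (m : ℂ) ^ 5)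
  simp_rw [partial_fractions (two_ne_zero' ℂ) (Nat.cast_ne_zero.2 hm)]
  convert! (((((order_four.mul_left (1 / (m : ℂ))).sub
    (order_three.mul_left (2 / (m : ℂ) ^ 2))).add
    (order_two.mul_left (4 / (m : ℂ) ^ 3))).add
    ((hasSum_one_div_add_two_mul_sub m).mul_left (16 / (m : ℂ) ^ 4))).sub at_zero).sub
    (hasSum_int_ite_add_two_mul_eq_zero m (64 / (m : ℂ) ^ 5)) using 1
  ring

end InnerSum

section DoubleSum

lemma one_div_natCast_cpow_add_natCast {w : ℂ} (hw : 0 < w.re) (m k : ℕ) :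
    1 / (m : ℂ) ^ (w + k) = 1 / (m : ℂ) ^ w * (1 / (m : ℂ) ^ k) := by
  rcases eq_or_ne m 0 with rfl | hm
  · have re_pos : 0 < (w + k).re := by
      rw [add_re, natCast_re]
      positivity
    simp [zero_cpow (ne_zero_of_re_pos hw), zero_cpow (ne_zero_of_re_pos re_pos)]
  · rw [cpow_add _ _ (Nat.cast_ne_zero.2 hm), cpow_natCast, one_div_mul_one_div]

lemma one_le_norm_intCast {n : ℤ} (hn : n ≠ 0) : 1 ≤ ‖(n : ℂ)‖ := by
  rw [norm_intCast]
  exact_mod_cast Int.one_le_abs hn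

lemma norm_intCast_le_three_mul_norm_mul_norm_add_two_mul {m n : ℤ} (hn : n ≠ 0)
    (h : m + 2 * n ≠ 0) : ‖(m : ℂ)‖ ≤ 3 * ‖(n : ℂ)‖ * ‖(m : ℂ) + 2 * n‖ := by
  have one_le_n := one_le_norm_intCast hn
  have one_le_add : 1 ≤ ‖(m : ℂ) + 2 * n‖ := by exact_mod_cast one_le_norm_intCast h
  calc ‖(m : ℂ)‖ = ‖((m : ℂ) + 2 * n) - 2 * n‖ := by rw [add_sub_cancel_right]
    _ ≤ ‖(m : ℂ) + 2 * n‖ + 2 * ‖(n : ℂ)‖ := by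
      simpa using norm_sub_le ((m : ℂ) + 2 * n) (2 * n)
    _ ≤ 3 * ‖(n : ℂ)‖ * ‖(m : ℂ) + 2 * n‖ := by nlinarith

lemma norm_one_div_pow_four_mul_add_two_mul_le {m : ℤ} (hm : m ≠ 0) (n : ℤ) :
    ‖1 / ((n : ℂ) ^ 4 * (m + 2 * n))‖ ≤ ‖1 / (m : ℂ)‖ * (3 * ‖1 / (n : ℂ) ^ 3‖) := by
  by_cases hn : n = 0
  · simp [hn]
  by_cases h : m + 2 * n = 0
  · have h' : (m : ℂ) + 2 * n = 0 := by exact_mod_cast h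
    rw [h', mul_zero, div_zero, norm_zero]
    positivity
  have m_pos : 0 < ‖(m : ℂ)‖ := norm_pos_iff.2 (Int.cast_ne_zero.2 hm)
  have n_pos : 0 < ‖(n : ℂ)‖ := norm_pos_iff.2 (Int.cast_ne_zero.2 hn)
  have m_add_pos : 0 < ‖(m : ℂ) + 2 * n‖ := norm_pos_iff.2 (by exact_mod_cast h)
  simp only [norm_div, norm_mul, norm_pow, norm_one]
  rw [mul_one_div, one_div_mul_eq_div, div_div, div_le_div_iff₀ (by positivity) (by positivity)]
  calc 1 * (‖(n : ℂ)‖ ^ 3 * ‖(m : ℂ)‖)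
      ≤ 1 * (‖(n : ℂ)‖ ^ 3 * (3 * ‖(n : ℂ)‖ * ‖(m : ℂ) + 2 * n‖)) := by
        gcongr
        exact norm_intCast_le_three_mul_norm_mul_norm_add_two_mul hn h
    _ = 3 * (‖(n : ℂ)‖ ^ 4 * ‖(m : ℂ) + 2 * n‖) := by ring

/-- The summand of `Σ^♯`, extended by the convention `1 / 0 = 0` to all pairs `(m, n)` so that the
double series can be summed over the full product `ℕ × ℤ`. -/
noncomputable def sigmaSharpTerm (s : ℂ) (m : ℕ) (n : ℤ) : ℂ :=
  1 / ((m : ℂ) ^ (s + 1) * (n : ℂ) ^ 4 * ((m : ℂ) + 2 * n))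

variable {s : ℂ}

lemma sigmaSharpTerm_zero_left (hs : s + 1 ≠ 0) (n : ℤ) : sigmaSharpTerm s 0 n = 0 := by
  simp [sigmaSharpTerm, zero_cpow hs]

lemma mem_of_sigmaSharpTerm_ne_zero (hs : s + 1 ≠ 0) {m : ℕ} {n : ℤ}
    (h : sigmaSharpTerm s m n ≠ 0) : m ≠ 0 ∧ n ≠ 0 ∧ (m : ℤ) + 2 * n ≠ 0 := by
  refine ⟨?_, ?_, fun h_add ↦ ?_⟩
  · rintro rfl
    exact h (sigmaSharpTerm_zero_left hs n)
  · rintro rfl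
    simp [sigmaSharpTerm] at h
  · have h_add' : (m : ℂ) + 2 * n = 0 := by exact_mod_cast h_add
    simp [sigmaSharpTerm, h_add'] at h

lemma summable_sigmaSharpTerm (hs : 0 < (s + 1).re) :
    Summable fun x : ℕ × ℤ ↦ sigmaSharpTerm s x.1 x.2 := by
  have over_m : Summable fun m : ℕ ↦ ‖1 / (m : ℂ) ^ (s + 1 + 1)‖ :=
    (summable_one_div_nat_cpow.2 (by simpa using hs)).norm
  have over_n : Summable fun n : ℤ ↦ 3 * ‖1 / (n : ℂ) ^ 3‖ :=
    (summable_int_one_div_pow (by decide)).norm.mul_left 3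
  refine .of_norm_bounded (over_m.mul_of_nonneg over_n (fun _ ↦ norm_nonneg _)
    fun _ ↦ by positivity) fun ⟨m, n⟩ ↦ ?_
  rcases eq_or_ne m 0 with rfl | hm
  · rw [sigmaSharpTerm_zero_left (ne_zero_of_re_pos hs), norm_zero]
    positivity
  have split : 1 / (m : ℂ) ^ (s + 1 + 1) = 1 / (m : ℂ) ^ (s + 1) * (1 / m) := by
    simpa only [Nat.cast_one, pow_one] using one_div_natCast_cpow_add_natCast hs m 1
  rw [sigmaSharpTerm, mul_assoc, ← one_div_mul_one_div, norm_mul, split, norm_mul, mul_assoc]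
  gcongr
  simpa only [Int.cast_natCast] using
    norm_one_div_pow_four_mul_add_two_mul_le (Int.natCast_ne_zero.2 hm) n

lemma hasSum_sigmaSharpTerm_right (hs : 0 < (s + 1).re) (m : ℕ) :
    HasSum (sigmaSharpTerm s m)
      ((Real.pi : ℂ) ^ 4 / 45 * (1 / (m : ℂ) ^ (s + 2)) +
        4 * (Real.pi : ℂ) ^ 2 / 3 * (1 / (m : ℂ) ^ (s + 4)) - 16 * (1 / (m : ℂ) ^ (s + 6)) -
        64 * (if Even m then 1 / (m : ℂ) ^ (s + 6) else 0)) := by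
  have split (k : ℕ) := one_div_natCast_cpow_add_natCast hs m k
  rw [show s + 2 = s + 1 + (1 : ℕ) by push_cast; ring,
    show s + 4 = s + 1 + (3 : ℕ) by push_cast; ring,
    show s + 6 = s + 1 + (5 : ℕ) by push_cast; ring, split, split, split]
  rcases eq_or_ne m 0 with rfl | hm
  · rw [funext (sigmaSharpTerm_zero_left (ne_zero_of_re_pos hs))]
    simp [zero_cpow (ne_zero_of_re_pos hs)]
  · convert! (hasSum_int_one_div_pow_four_mul_add_two_mul hm).mul_left (1 / (m : ℂ) ^ (s + 1))
      using 1
    · ext n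
      rw [sigmaSharpTerm, one_div_mul_one_div, mul_assoc]
    · split_ifs <;> ring

lemma two_cpow_neg_eq_mul_two_cpow_neg_add_six (s : ℂ) :
    (2 : ℂ) ^ (-s) = 64 * 2 ^ (-(s + 6)) := by
  rw [neg_add, cpow_add _ _ two_ne_zero, cpow_neg 2 6, cpow_ofNat]
  ring

lemma hasSum_sigmaSharpTerm (hs : 0 < (s + 1).re) :
    HasSum (fun x : ℕ × ℤ ↦ sigmaSharpTerm s x.1 x.2)
      (((Real.pi : ℂ) ^ 4 / 45) * riemannZeta (s + 2) +
        (4 * (Real.pi : ℂ) ^ 2 / 3) * riemannZeta (s + 4) -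
        (16 + (2 : ℂ) ^ (-s)) * riemannZeta (s + 6)) := by
  have neg_one_lt : 0 < s.re + 1 := hs
  have sum_two := hasSum_one_div_nat_cpow (s := s + 2) (by rw [add_re, re_ofNat]; linarith)
  have sum_four := hasSum_one_div_nat_cpow (s := s + 4) (by rw [add_re, re_ofNat]; linarith)
  have one_lt : 1 < (s + 6).re := by rw [add_re, re_ofNat]; linarith
  have sum_over_m := (((sum_two.mul_left ((Real.pi : ℂ) ^ 4 / 45)).add
    (sum_four.mul_left (4 * (Real.pi : ℂ) ^ 2 / 3))).sub
    ((hasSum_one_div_nat_cpow one_lt).mul_left 16)).sub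
    ((hasSum_ite_even_one_div_nat_cpow one_lt).mul_left 64)
  have double_sum := (summable_sigmaSharpTerm hs).hasSum
  convert double_sum using 1
  rw [(double_sum.prod_fiberwise (hasSum_sigmaSharpTerm_right hs)).unique sum_over_m,
    two_cpow_neg_eq_mul_two_cpow_neg_add_six]
  ring

end DoubleSum

theorem sigmaSharp_eval_general (s : ℂ) (hs : -1 < s.re) :
    HasSum (fun x : {x : ℤ × ℤ // 1 ≤ x.1 ∧ x.2 ≠ 0 ∧ x.1 + 2 * x.2 ≠ 0} ↦
        1 / ((x.1.1 : ℂ) ^ (s + 1) * (x.1.2 : ℂ) ^ (4 : ℕ) *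
          ((x.1.1 : ℂ) + 2 * (x.1.2 : ℂ))))
      (((Real.pi : ℂ) ^ 4 / 45) * riemannZeta (s + 2) +
        (4 * (Real.pi : ℂ) ^ 2 / 3) * riemannZeta (s + 4) -
        (16 + (2 : ℂ) ^ (-s)) * riemannZeta (s + 6)) := by
  have re_pos : 0 < (s + 1).re := by rwa [add_re, one_re, ← neg_lt_iff_pos_add]
  let toNatInt (x : {x : ℤ × ℤ // 1 ≤ x.1 ∧ x.2 ≠ 0 ∧ x.1 + 2 * x.2 ≠ 0}) : ℕ × ℤ :=
    (x.1.1.toNat, x.1.2)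
  have cast_toNat (x) : ((toNatInt x).1 : ℤ) = x.1.1 := Int.toNat_of_nonneg (by have := x.2; lia)
  have injective : toNatInt.Injective := fun x y h ↦ Subtype.ext <| Prod.ext
    (by rw [← cast_toNat x, h, cast_toNat y]) (congrArg Prod.snd h :)
  have vanishes : ∀ x ∉ Set.range toNatInt, sigmaSharpTerm s x.1 x.2 = 0 := by
    rintro ⟨m, n⟩ not_mem
    by_contra h
    have := mem_of_sigmaSharpTerm_ne_zero (ne_zero_of_re_pos re_pos) h
    exact not_mem ⟨⟨(m, n), by lia⟩, rfl⟩
  convert (injective.hasSum_iff vanishes).2 (hasSum_sigmaSharpTerm re_pos) using 2 with x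
  rw [Function.comp_apply, sigmaSharpTerm, ← Int.cast_natCast, cast_toNat]

theorem sigmaSharp_eval (s : ℂ) (hs : 1 < s.re) :
    (∑' x : {x : ℤ × ℤ // 1 ≤ x.1 ∧ x.2 ≠ 0 ∧ x.1 + 2 * x.2 ≠ 0},
          1 / ((x.1.1 : ℂ) ^ (s + 1) * (x.1.2 : ℂ) ^ (4 : ℕ) *
            ((x.1.1 : ℂ) + 2 * (x.1.2 : ℂ)))) =
      ((Real.pi : ℂ) ^ 4 / 45) * riemannZeta (s + 2) +
        (4 * (Real.pi : ℂ) ^ 2 / 3) * riemannZeta (s + 4) -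
        (16 + (2 : ℂ) ^ (-s)) * riemannZeta (s + 6) :=
  (sigmaSharp_eval_general s (by linarith)).tsum_eq
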